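/- arXiv:2512.12446 — 4 statements merged into one kernel-verified Lean document; each statement's English description precedes it below -/
import Mathlib

section
/- Let n ≥ 3 be a finite natural number and adopt the cylindric set algebra setting over a base set V. Let i ≠ j < n and let a, b ∈ A be atoms of A with a ⊆ d_ij and b ⊆ d_ij. Then either (dom_i(a) = dom_i(b) and dom_j(a) = dom_j(b)) or (dom_i(a) ∩ dom_i(b) = ∅ and dom_j(a) ∩ dom_j(b) = ∅). -/
/-- Cylindrification: `C_i(R) = {s : s(i/u) ∈ R for some u}`. -/
def cyl {n : ℕ} {V : Type} (i : Fin n) (R : Set (Fin n → V)) : Set (Fin n → V) :=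
  {s | ∃ u : V, Function.update s i u ∈ R}

/-- `dom_i(R) = {s(i) : s ∈ R}`. -/
def domAt {n : ℕ} {V : Type} (i : Fin n) (R : Set (Fin n → V)) : Set V :=
  (fun s => s i) '' R

/-!
For `R ∈ A`, cylindrifying along every coordinate except `i` shows that `{s | s i ∈ dom_i(R)}` is
in `A`. An atom is contained in every member of `A` that it meets, so the `i`-th domains of two
atoms are equal as soon as they meet. It remains to see that, below `d_ij`, the `i`-th domains meet
exactly when the `j`-th ones do. Take `s ∈ a` and `t ∈ b` with `s i = t i`. Replacing the `j`-th
coordinate of `t` by `s j` stays inside `d_ij`, which depends on the coordinates `i` and `j` only,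
and by the last cylindric axiom no member of `A`, in particular not `{r | r j ∈ dom_j(a)}`, can
separate two points of `d_ij` that differ only at `j`.
-/

/-- Cylindrification along all the coordinates in `S` at once: the assignments that agree with
some member of `R` outside `S`. -/
def cylFinset {n : ℕ} {V : Type} (S : Finset (Fin n)) (R : Set (Fin n → V)) :
    Set (Fin n → V) :=
  {s | ∃ t ∈ R, ∀ k ∉ S, t k = s k}

/-- The cylindric set algebra setting: `A` is a Boolean algebra of subsets of `Fin n → V` closed
under cylindrification and containing the diagonal elements `d i j`, which satisfy the cylindric
algebra axioms. As in the abstract axioms, `d i j` need not be `{s | s i = s j}`. -/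
structure IsCylindricSetAlgebra {n : ℕ} {V : Type} (A : Set (Set (Fin n → V)))
    (d : Fin n → Fin n → Set (Fin n → V)) : Prop where
  union_mem : ∀ x ∈ A, ∀ y ∈ A, x ∪ y ∈ A
  compl_mem : ∀ x ∈ A, xᶜ ∈ A
  empty_mem : ∅ ∈ A
  univ_mem : Set.univ ∈ A
  cyl_mem : ∀ i, ∀ x ∈ A, cyl i x ∈ A
  diag_mem : ∀ i j, d i j ∈ A
  diag_self : ∀ i, d i i = Set.univ
  diag_eq_cyl : ∀ i j k, k ≠ i → k ≠ j → d i j = cyl k (d i k ∩ d k j)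
  cyl_diag_inter_cyl_diag_compl :
    ∀ i j, i ≠ j → ∀ x ∈ A, cyl i (d i j ∩ x) ∩ cyl i (d i j ∩ xᶜ) = ∅

theorem subset_of_minimal_of_not_disjoint {α : Type*} {A : Set (Set α)} (hA : InfClosed A)
    {a x : Set α} (ha : Minimal (fun y => y ∈ A ∧ y.Nonempty) a) (hx : x ∈ A)
    (h : ¬Disjoint a x) : a ⊆ x :=
  have hax : a ⊆ a ∩ x :=
    ha.le_of_le ⟨hA ha.prop.1 hx, Set.not_disjoint_iff_nonempty_inter.mp h⟩ Set.inter_subset_left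
  hax.trans Set.inter_subset_right

section Cylindrification

variable {n : ℕ} {V : Type} {R : Set (Fin n → V)} {A : Set (Set (Fin n → V))}

theorem cyl_cyl (k : Fin n) (R : Set (Fin n → V)) : cyl k (cyl k R) = cyl k R := by
  ext s
  simpa [cyl] using fun u _ => ⟨u⟩

theorem cylFinset_empty (R : Set (Fin n → V)) : cylFinset ∅ R = R := by
  ext s
  simp [cylFinset, ← funext_iff]

theorem cylFinset_insert (k : Fin n) (S : Finset (Fin n)) (R : Set (Fin n → V)) :
    cylFinset (insert k S) R = cyl k (cylFinset S R) := by
  ext s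
  constructor
  · rintro ⟨t, ht, hts⟩
    refine ⟨t k, t, ht, fun l hl => ?_⟩
    rcases eq_or_ne l k with rfl | hlk
    · simp only [Function.update_self]
    · rw [Function.update_of_ne hlk]
      exact hts l (by simp [hlk, hl])
  · rintro ⟨u, t, ht, hts⟩
    refine ⟨t, ht, fun l hl => ?_⟩
    rw [Finset.mem_insert, not_or] at hl
    rw [hts l hl.2, Function.update_of_ne hl.1]

theorem cylFinset_mem (hcyl : ∀ i, ∀ x ∈ A, cyl i x ∈ A) (S : Finset (Fin n)) (hR : R ∈ A) :
    cylFinset S R ∈ A := by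
  induction S using Finset.induction_on with
  | empty => rwa [cylFinset_empty]
  | insert k S _ ih =>
    rw [cylFinset_insert]
    exact hcyl k _ ih

theorem cylFinset_eq_self {S : Finset (Fin n)} (hR : ∀ k ∈ S, cyl k R = R) :
    cylFinset S R = R := by
  induction S using Finset.induction_on with
  | empty => exact cylFinset_empty R
  | insert k S _ ih =>
    rw [Finset.forall_mem_insert] at hR
    rw [cylFinset_insert, ih hR.2, hR.1]

theorem preimage_eval_domAt (i : Fin n) (R : Set (Fin n → V)) :
    Function.eval i ⁻¹' domAt i R = cylFinset {i}ᶜ R := by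
  ext s
  simp [domAt, cylFinset]

theorem preimage_eval_domAt_mem (hcyl : ∀ i, ∀ x ∈ A, cyl i x ∈ A) (i : Fin n) (hR : R ∈ A) :
    Function.eval i ⁻¹' domAt i R ∈ A :=
  preimage_eval_domAt i R ▸ cylFinset_mem hcyl _ hR

end Cylindrification

namespace IsCylindricSetAlgebra

variable {n : ℕ} {V : Type} {A : Set (Set (Fin n → V))} {d : Fin n → Fin n → Set (Fin n → V)}
  {i j k : Fin n} {a b x : Set (Fin n → V)} {s t : Fin n → V}

theorem infClosed (hA : IsCylindricSetAlgebra A d) : InfClosed A := by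
  intro x hx y hy
  have hxy := hA.compl_mem _ (hA.union_mem _ (hA.compl_mem x hx) _ (hA.compl_mem y hy))
  rwa [Set.compl_union, compl_compl, compl_compl] at hxy

theorem cyl_diag (hA : IsCylindricSetAlgebra A d) (hki : k ≠ i) (hkj : k ≠ j) :
    cyl k (d i j) = d i j := by
  rw [hA.diag_eq_cyl i j k hki hkj, cyl_cyl]

theorem mem_diag_of_eq (hA : IsCylindricSetAlgebra A d) (hs : s ∈ d i j) (hi : s i = t i)
    (hj : s j = t j) : t ∈ d i j := by
  have hinv : cylFinset {i, j}ᶜ (d i j) = d i j := by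
    refine cylFinset_eq_self fun k hk => ?_
    simp only [Finset.mem_compl, Finset.mem_insert, Finset.mem_singleton, not_or] at hk
    exact hA.cyl_diag hk.1 hk.2
  rw [← hinv]
  refine ⟨s, hs, fun k hk => ?_⟩
  simp only [Finset.mem_compl, Finset.mem_insert, Finset.mem_singleton, not_not] at hk
  rcases hk with rfl | rfl <;> assumption

theorem mem_of_mem_diag_of_update_mem (hA : IsCylindricSetAlgebra A d) (hij : i ≠ j) (hx : x ∈ A)
    (hs : s ∈ d i j) {u : V} (hud : Function.update s i u ∈ d i j)
    (hux : Function.update s i u ∈ x) : s ∈ x := by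
  by_contra hsx
  have hcompl : s ∈ cyl i (d i j ∩ xᶜ) := ⟨s i, by simpa using ⟨hs, hsx⟩⟩
  exact (hA.cyl_diag_inter_cyl_diag_compl i j hij x hx).subset ⟨⟨u, hud, hux⟩, hcompl⟩

theorem diag_subset_swap (hA : IsCylindricSetAlgebra A d) (hij : i ≠ j) : d i j ⊆ d j i := by
  intro s hs
  have hcyl : s ∈ cyl i (d j i ∩ d i j) := by
    rw [← hA.diag_eq_cyl j j i hij hij, hA.diag_self]
    trivial
  obtain ⟨u, huji, huij⟩ := hcyl
  exact hA.mem_of_mem_diag_of_update_mem hij (hA.diag_mem j i) hs huij huji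

theorem diag_comm (hA : IsCylindricSetAlgebra A d) (i j : Fin n) : d i j = d j i := by
  rcases eq_or_ne i j with rfl | hij
  · rfl
  · exact (hA.diag_subset_swap hij).antisymm (hA.diag_subset_swap hij.symm)

theorem apply_mem_domAt_of_mem_diag (hA : IsCylindricSetAlgebra A d) (hij : i ≠ j) (hx : x ∈ A)
    (hxd : x ⊆ d i j) (ht : t ∈ d i j) (hti : t i ∈ domAt i x) : t j ∈ domAt j x := by
  obtain ⟨s, hs, hst : s i = t i⟩ := hti
  have hud : Function.update t j (s j) ∈ d i j :=
    hA.mem_diag_of_eq (hxd hs) (by rw [Function.update_of_ne hij, hst])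
      (by rw [Function.update_self])
  have hux : Function.update t j (s j) ∈ Function.eval j ⁻¹' domAt j x :=
    ⟨s, hs, by simp only [Function.eval, Function.update_self]⟩
  rw [hA.diag_comm i j] at ht hud
  exact hA.mem_of_mem_diag_of_update_mem hij.symm (preimage_eval_domAt_mem hA.cyl_mem j hx)
    ht hud hux

theorem apply_mem_domAt_iff_of_mem_diag (hA : IsCylindricSetAlgebra A d) (hij : i ≠ j)
    (hx : x ∈ A) (hxd : x ⊆ d i j) (ht : t ∈ d i j) : t i ∈ domAt i x ↔ t j ∈ domAt j x :=
  ⟨hA.apply_mem_domAt_of_mem_diag hij hx hxd ht,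
    hA.apply_mem_domAt_of_mem_diag hij.symm hx (hA.diag_comm i j ▸ hxd) (hA.diag_comm i j ▸ ht)⟩

theorem disjoint_domAt_iff_of_subset_diag (hA : IsCylindricSetAlgebra A d) (hij : i ≠ j)
    (hx : x ∈ A) (hxd : x ⊆ d i j) {y : Set (Fin n → V)} (hyd : y ⊆ d i j) :
    Disjoint (domAt i y) (domAt i x) ↔ Disjoint (domAt j y) (domAt j x) := by
  simp only [Set.disjoint_left, domAt, Set.forall_mem_image]
  exact forall₂_congr fun t ht =>
    not_congr (hA.apply_mem_domAt_iff_of_mem_diag hij hx hxd (hyd ht))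

theorem domAt_subset_of_minimal (hA : IsCylindricSetAlgebra A d) (i : Fin n)
    (ha : Minimal (fun y => y ∈ A ∧ y.Nonempty) a) (hx : x ∈ A)
    (h : ¬Disjoint (domAt i a) (domAt i x)) : domAt i a ⊆ domAt i x :=
  Set.image_subset_iff.mpr <|
    subset_of_minimal_of_not_disjoint hA.infClosed ha (preimage_eval_domAt_mem hA.cyl_mem i hx)
      (mt Set.disjoint_image_left.mpr h)

theorem domAt_eq_of_minimal (hA : IsCylindricSetAlgebra A d) (i : Fin n)
    (ha : Minimal (fun y => y ∈ A ∧ y.Nonempty) a)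
    (hb : Minimal (fun y => y ∈ A ∧ y.Nonempty) b)
    (h : ¬Disjoint (domAt i a) (domAt i b)) : domAt i a = domAt i b :=
  (hA.domAt_subset_of_minimal i ha hb.prop.1 h).antisymm
    (hA.domAt_subset_of_minimal i hb ha.prop.1 (disjoint_comm.not.mp h))

end IsCylindricSetAlgebra

theorem stmt14_general {n : ℕ} {V : Type} {A : Set (Set (Fin n → V))}
    {d : Fin n → Fin n → Set (Fin n → V)} (hA : IsCylindricSetAlgebra A d) {i j : Fin n}
    (hij : i ≠ j) {a b : Set (Fin n → V)}
    (ha : Minimal (fun x => x ∈ A ∧ x.Nonempty) a)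
    (hb : Minimal (fun x => x ∈ A ∧ x.Nonempty) b) (had : a ⊆ d i j) (hbd : b ⊆ d i j) :
    (domAt i a = domAt i b ∧ domAt j a = domAt j b) ∨
      (domAt i a ∩ domAt i b = ∅ ∧ domAt j a ∩ domAt j b = ∅) := by
  have hdisj : Disjoint (domAt i a) (domAt i b) ↔ Disjoint (domAt j a) (domAt j b) :=
    hA.disjoint_domAt_iff_of_subset_diag hij hb.prop.1 hbd had
  by_cases h : Disjoint (domAt i a) (domAt i b)
  · exact Or.inr ⟨h.inter_eq, (hdisj.mp h).inter_eq⟩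
  · exact Or.inl ⟨hA.domAt_eq_of_minimal i ha hb h,
      hA.domAt_eq_of_minimal j ha hb (mt hdisj.mpr h)⟩

/-- Lemma (dom-particio): in a cylindric set algebra over `V`, if `a, b` are atoms
below `d_ij` (`i ≠ j`), then their `i`-th and `j`-th domains are either equal or
disjoint (simultaneously). -/
theorem stmt14 {n : ℕ} (hn : 3 ≤ n) {V : Type}
    (A : Set (Set (Fin n → V)))
    (hunion : ∀ x ∈ A, ∀ y ∈ A, x ∪ y ∈ A)
    (hcompl : ∀ x ∈ A, xᶜ ∈ A)
    (hempty : (∅ : Set (Fin n → V)) ∈ A)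
    (huniv : (Set.univ : Set (Fin n → V)) ∈ A)
    (hcyl : ∀ (i : Fin n), ∀ x ∈ A, cyl i x ∈ A)
    (d : Fin n → Fin n → Set (Fin n → V))
    (hdA : ∀ i j : Fin n, d i j ∈ A)
    (hC5 : ∀ i : Fin n, d i i = Set.univ)
    (hC6 : ∀ i j k : Fin n, k ≠ i → k ≠ j → d i j = cyl k (d i k ∩ d k j))
    (hC7 : ∀ i j : Fin n, i ≠ j → ∀ x ∈ A, cyl i (d i j ∩ x) ∩ cyl i (d i j ∩ xᶜ) = ∅)
    (i j : Fin n) (hij : i ≠ j)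
    (a b : Set (Fin n → V)) (haA : a ∈ A) (hbA : b ∈ A)
    (hane : a ≠ ∅) (hamin : ∀ x ∈ A, x ≠ ∅ → x ⊆ a → x = a)
    (hbne : b ≠ ∅) (hbmin : ∀ x ∈ A, x ≠ ∅ → x ⊆ b → x = b)
    (had : a ⊆ d i j) (hbd : b ⊆ d i j) :
    (domAt i a = domAt i b ∧ domAt j a = domAt j b) ∨
    (domAt i a ∩ domAt i b = ∅ ∧ domAt j a ∩ domAt j b = ∅) :=
  stmt14_general ⟨hunion, hcompl, hempty, huniv, hcyl, hdA, hC5, hC6, hC7⟩ hij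
    ⟨⟨haA, Set.nonempty_iff_ne_empty.mpr hane⟩, fun x hx hxa => (hamin x hx.1 hx.2.ne_empty hxa).ge⟩
    ⟨⟨hbA, Set.nonempty_iff_ne_empty.mpr hbne⟩, fun x hx hxb => (hbmin x hx.1 hx.2.ne_empty hxb).ge⟩
    had hbd
end

section
/- Let n ≥ 1 be a natural number, let U be a set, let W be a finite nonempty commutative group, and let V = U × W. For s : Fin n → U and w : Fin n → W let s×w : Fin n → V be the function i ↦ (s(i), w(i)), and let ŝ = {s×w : w : Fin n → W} ⊆ ^nV. Then for every s : Fin n → U there exists a family (s_σ)_{σ ∈ W} of pairwise disjoint nonempty subsets of ^nV whose union is ŝ, such that C_i(s_σ) = C_i(ŝ) for every σ ∈ W and every i < n. -/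
/-- The blow-up `ŝ = {s×w : w : Fin n → W}` of a sequence `s : Fin n → U`. -/
def shat {n : ℕ} {U W : Type} (s : Fin n → U) : Set (Fin n → U × W) :=
  {t | ∃ w : Fin n → W, t = fun i => (s i, w i)}

/-!
Fix a function `F` of `w : Fin n → W` that takes every value `σ` as any single coordinate of `w`
varies, for instance the sum of all coordinates in a commutative group. The pieces of `ŝ` are the
fibres of `s×w ↦ F w`: a cylindrification forgets one coordinate, and that coordinate alone can be
adjusted to move a point of `ŝ` into any prescribed fibre. Since every nonempty type carries a
commutative group structure, such an `F` always exists.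
-/

section CoordinatewiseSurjective

variable {ι W S : Type*} [DecidableEq ι]

/-- A function of several variables is coordinatewise surjective if it takes every value as any one
of its variables varies, however the others are fixed. For `S = W` finite such functions are the
Latin hypercubes. -/
def CoordinatewiseSurjective (F : (ι → W) → S) : Prop :=
  ∀ (w : ι → W) (i : ι), Function.Surjective fun a => F (Function.update w i a)

theorem CoordinatewiseSurjective.surjective [Nonempty ι] [Nonempty W] {F : (ι → W) → S}
    (hF : CoordinatewiseSurjective F) : Function.Surjective F :=
  .of_comp (hF (Classical.arbitrary _) (Classical.arbitrary _))

theorem coordinatewiseSurjective_sum [Fintype ι] [AddCommGroup W] :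
    CoordinatewiseSurjective fun w : ι → W => ∑ j, w j := by
  intro w i σ
  use σ - ∑ j ∈ Finset.univ \ {i}, w j
  exact (Finset.sum_update_of_mem (Finset.mem_univ i) w _).trans (sub_add_cancel σ _)

theorem exists_coordinatewiseSurjective (ι W : Type*) [Finite ι] [DecidableEq ι] [Nonempty W] :
    ∃ F : (ι → W) → W, CoordinatewiseSurjective F := by
  obtain ⟨_⟩ := nonempty_fintype ι
  obtain ⟨_⟩ : Nonempty (CommRing W) := inferInstance
  exact ⟨_, coordinatewiseSurjective_sum⟩

end CoordinatewiseSurjective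

theorem cyl_mono {n : ℕ} {V : Type} (i : Fin n) {R R' : Set (Fin n → V)} (h : R ⊆ R') :
    cyl i R ⊆ cyl i R' :=
  fun _ ⟨u, hu⟩ => ⟨u, h hu⟩

section ShatFiber

variable {n : ℕ} {U W : Type} {S : Type*} {F : (Fin n → W) → S} {s : Fin n → U}

theorem mem_shat_iff {t : Fin n → U × W} : t ∈ shat s ↔ Prod.fst ∘ t = s := by
  constructor
  · rintro ⟨w, rfl⟩
    rfl
  · rintro rfl
    exact ⟨Prod.snd ∘ t, rfl⟩

/-- The fibre over `σ` of the map `s×w ↦ F w` on `ŝ`; these are the pieces `s_σ` of the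
partition. -/
def shatFiber (F : (Fin n → W) → S) (s : Fin n → U) (σ : S) : Set (Fin n → U × W) :=
  {t ∈ shat s | F (Prod.snd ∘ t) = σ}

theorem shatFiber_inter_shatFiber {σ τ : S} (h : σ ≠ τ) :
    shatFiber F s σ ∩ shatFiber F s τ = ∅ :=
  Set.eq_empty_of_forall_notMem fun _ ⟨hσ, hτ⟩ => h (hσ.2.symm.trans hτ.2)

theorem shatFiber_nonempty (hF : Function.Surjective F) (s : Fin n → U) (σ : S) :
    (shatFiber F s σ).Nonempty := by
  obtain ⟨w, hw⟩ := hF σ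
  exact ⟨fun i => (s i, w i), ⟨w, rfl⟩, hw⟩

theorem iUnion_shatFiber (F : (Fin n → W) → S) (s : Fin n → U) :
    ⋃ σ, shatFiber F s σ = shat s := by
  ext t
  simp [shatFiber]

theorem cyl_shatFiber (hF : CoordinatewiseSurjective F) (s : Fin n → U) (σ : S) (i : Fin n) :
    cyl i (shatFiber F s σ) = cyl i (shat s) := by
  apply (cyl_mono i fun _ ht => ht.1).antisymm
  rintro t ⟨⟨u, a⟩, hu⟩
  obtain ⟨b, hb⟩ := hF (Prod.snd ∘ t) i σ
  refine ⟨(u, b), ?_, ?_⟩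
  · rw [mem_shat_iff, Function.comp_update] at hu ⊢
    exact hu
  · rwa [Function.comp_update]

end ShatFiber

theorem stmt17_general (n : ℕ) (hn : 1 ≤ n) (U W : Type) [Nonempty W] :
    ∀ s : Fin n → U,
      ∃ g : W → Set (Fin n → U × W),
        (∀ σ τ : W, σ ≠ τ → g σ ∩ g τ = ∅) ∧
        (∀ σ : W, (g σ).Nonempty) ∧
        (⋃ σ : W, g σ) = shat s ∧
        (∀ (σ : W) (i : Fin n), cyl i (g σ) = cyl i (shat s : Set (Fin n → U × W))) := by
  intro s
  have : Nonempty (Fin n) := ⟨⟨0, hn⟩⟩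
  obtain ⟨F, hF⟩ := exists_coordinatewiseSurjective (Fin n) W
  exact ⟨shatFiber F s, fun _ _ => shatFiber_inter_shatFiber, shatFiber_nonempty hF.surjective s,
    iUnion_shatFiber F s, cyl_shatFiber hF s⟩

/-- Lemma: for a finite commutative group `W` and `n ≥ 1`, the blow-up `ŝ` of any
sequence `s : Fin n → U` can be partitioned into `|W|` pairwise disjoint nonempty
pieces `s_σ` (`σ ∈ W`) such that `C_i(s_σ) = C_i(ŝ)` for all `σ` and `i`. -/
theorem stmt17 (n : ℕ) (hn : 1 ≤ n) (U W : Type) [Fintype W] [CommGroup W] :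
    ∀ s : Fin n → U,
      ∃ g : W → Set (Fin n → U × W),
        (∀ σ τ : W, σ ≠ τ → g σ ∩ g τ = ∅) ∧
        (∀ σ : W, (g σ).Nonempty) ∧
        (⋃ σ : W, g σ) = shat s ∧
        (∀ (σ : W) (i : Fin n), cyl i (g σ) = cyl i (shat s : Set (Fin n → U × W))) :=
  stmt17_general n hn U W
end

section
/- Let n be a natural number, let i ≠ j < n, let V be a set, and let A ⊆ 𝒫(^nV) be closed under complement and intersection and under C_i. Let d ∈ A be such that D_ij ⊆ d and such that C_i(d ∩ x) ∩ C_i(d ∩ xᶜ) = ∅ for every x ∈ A. Then for every a ∈ A with a ⊆ d one has C_i(a) = S_ij(a), and consequently C_i(x ∩ d) = S_ij(x) for every x ∈ A; that is, the derived substitution x ↦ C_i(x ∩ d) coincides on A with the set-theoretic substitution S_ij. -/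
/-- Substitution: `S_ij(R) = {s : s(i/s(j)) ∈ R}`. -/
def subst {n : ℕ} {V : Type} (i j : Fin n) (R : Set (Fin n → V)) : Set (Fin n → V) :=
  {s | Function.update s i (s j) ∈ R}

/-- Diagonal: `D_ij = {s : s(i) = s(j)}`. -/
def diag {n : ℕ} (V : Type) (i j : Fin n) : Set (Fin n → V) :=
  {s | s i = s j}

/-!
Substitution is the evaluation of `x` at the point `s(i/s(j))`, which lies on the diagonal. So if
`D_ij ⊆ d`, then intersecting with `d` does not change `S_ij(x)`, and `S_ij(x) ⊆ C_i(d ∩ x)`.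
Applied to both `x` and its complement, this makes the sets `C_i(d ∩ x)` and `C_i(d ∩ xᶜ)` contain
the complementary sets `S_ij(x)` and `S_ij(x)ᶜ`; being disjoint, they must equal them.
-/

section

variable {n : ℕ} {V : Type} {i j : Fin n} {d x : Set (Fin n → V)}

theorem update_mem_diag (i j : Fin n) (s : Fin n → V) :
    Function.update s i (s j) ∈ diag V i j := by
  simp [diag, Function.update_apply]

theorem subst_subset_cyl (i j : Fin n) (x : Set (Fin n → V)) : subst i j x ⊆ cyl i x :=
  fun s hs => ⟨s j, hs⟩

theorem subst_compl (i j : Fin n) (x : Set (Fin n → V)) : subst i j xᶜ = (subst i j x)ᶜ :=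
  rfl

theorem subst_inter_of_diag_subset (hd : diag V i j ⊆ d) (x : Set (Fin n → V)) :
    subst i j (d ∩ x) = subst i j x :=
  Set.ext fun s => and_iff_right (hd (update_mem_diag i j s))

theorem subst_subset_cyl_inter (hd : diag V i j ⊆ d) (x : Set (Fin n → V)) :
    subst i j x ⊆ cyl i (d ∩ x) :=
  (subst_inter_of_diag_subset hd x).symm.subset.trans (subst_subset_cyl i j (d ∩ x))

theorem cyl_inter_eq_subst (hd : diag V i j ⊆ d)
    (hx : Disjoint (cyl i (d ∩ x)) (cyl i (d ∩ xᶜ))) :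
    cyl i (d ∩ x) = subst i j x := by
  refine Set.Subset.antisymm ?_ (subst_subset_cyl_inter hd x)
  calc
    cyl i (d ∩ x) ⊆ (cyl i (d ∩ xᶜ))ᶜ := hx.subset_compl_right
    _ ⊆ (subst i j xᶜ)ᶜ := Set.compl_subset_compl.mpr (subst_subset_cyl_inter hd xᶜ)
    _ = subst i j x := by rw [subst_compl, compl_compl]

end

theorem stmt18_general {n : ℕ} {V : Type} {i j : Fin n} {A : Set (Set (Fin n → V))}
    {d : Set (Fin n → V)} (hdiag : diag V i j ⊆ d)
    (hC7 : ∀ x ∈ A, cyl i (d ∩ x) ∩ cyl i (d ∩ xᶜ) = ∅) :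
    (∀ a ∈ A, a ⊆ d → cyl i a = subst i j a) ∧
    (∀ x ∈ A, cyl i (x ∩ d) = subst i j x) := by
  have cyl_eq : ∀ x ∈ A, cyl i (x ∩ d) = subst i j x := fun x hx => by
    rw [Set.inter_comm]
    exact cyl_inter_eq_subst hdiag (Set.disjoint_iff_inter_eq_empty.mpr (hC7 x hx))
  refine ⟨fun a ha had => ?_, cyl_eq⟩
  rw [← cyl_eq a ha, Set.inter_eq_left.mpr had]

/-- Lemma: if `A` is closed under complement, intersection and `C_i`, and `d ∈ A`
contains the diagonal `D_ij` and satisfies the C7-style axiom for all `x ∈ A`, then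
`C_i(a) = S_ij(a)` for all `a ∈ A` with `a ⊆ d`, and the derived substitution
`x ↦ C_i(x ∩ d)` coincides with `S_ij` on `A`. -/
theorem stmt18 (n : ℕ) (i j : Fin n) (hij : i ≠ j) {V : Type}
    (A : Set (Set (Fin n → V)))
    (hcompl : ∀ x ∈ A, xᶜ ∈ A)
    (hinter : ∀ x ∈ A, ∀ y ∈ A, x ∩ y ∈ A)
    (hcyl : ∀ x ∈ A, cyl i x ∈ A)
    (d : Set (Fin n → V)) (hdA : d ∈ A)
    (hdiag : diag V i j ⊆ d)
    (hC7 : ∀ x ∈ A, cyl i (d ∩ x) ∩ cyl i (d ∩ xᶜ) = ∅) :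
    (∀ a ∈ A, a ⊆ d → cyl i a = subst i j a) ∧
    (∀ x ∈ A, cyl i (x ∩ d) = subst i j x) :=
  stmt18_general hdiag hC7
end

section
/- Let n : ℕ, let U be a set, let W be a nonempty set, and let V = U × W. For s : Fin n → U and w : Fin n → W let s×w : Fin n → V be the function i ↦ (s(i), w(i)). Define F : 𝒫(^nU) → 𝒫(^nV) by F(X) = {s×w : s ∈ X, w : Fin n → W}. Then F is injective and satisfies, for all X, Y ⊆ ^nU, all families (X_k) of subsets of ^nU, and all i, j < n: F(X ∪ Y) = F(X) ∪ F(Y); F(Xᶜ) = F(X)ᶜ; F(⋃_k X_k) = ⋃_k F(X_k); F(C_i^U(X)) = C_i^V(F(X)); F(S_ij^U(X)) = S_ij^V(F(X)); and F(P_ij(X)) = P_ij(F(X)). -/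
/-- Transposition: `P_ij(R) = {s : s(i/s(j))(j/s(i)) ∈ R}`. -/
def transp {n : ℕ} {V : Type} (i j : Fin n) (R : Set (Fin n → V)) : Set (Fin n → V) :=
  {s | Function.update (Function.update s i (s j)) j (s i) ∈ R}

/-- The blow-up embedding `F(X) = {s×w : s ∈ X, w : Fin n → W} ⊆ 𝒫(ⁿ(U×W))`. -/
def Fmap {n : ℕ} {U W : Type} (X : Set (Fin n → U)) : Set (Fin n → U × W) :=
  {t | ∃ s ∈ X, ∃ w : Fin n → W, t = fun i => (s i, w i)}

/-!
`Fmap` is the preimage map of `t ↦ Prod.fst ∘ t`, so the Boolean part is that of any preimage.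
Composing with a map `f : V → U` on the left commutes with changing a coordinate:
`f ∘ t(i/v) = (f ∘ t)(i/f(v))`. For substitutions and transpositions `v` is itself a coordinate of
`t`, so any `f` will do; for cylindrifications a witness `u : U` has to be lifted to some `v : V`,
and this is where surjectivity of `f` enters.
-/

section PreimageComp

variable {n : ℕ} {U V : Type}

theorem preimage_comp_cyl {f : V → U} (hf : Function.Surjective f) (i : Fin n)
    (X : Set (Fin n → U)) : (f ∘ ·) ⁻¹' cyl i X = cyl i ((f ∘ ·) ⁻¹' X) := by
  ext t
  calc
    (∃ u, Function.update (f ∘ t) i u ∈ X) ↔ ∃ v, Function.update (f ∘ t) i (f v) ∈ X := hf.exists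
    _ ↔ ∃ v, f ∘ Function.update t i v ∈ X := by simp only [Function.comp_update]

theorem preimage_comp_subst (f : V → U) (i j : Fin n) (X : Set (Fin n → U)) :
    (f ∘ ·) ⁻¹' subst i j X = subst i j ((f ∘ ·) ⁻¹' X) := by
  ext t
  simp only [subst, Set.mem_preimage, Set.mem_ofPred_eq, Function.comp_update, Function.comp_apply]

theorem preimage_comp_transp (f : V → U) (i j : Fin n) (X : Set (Fin n → U)) :
    (f ∘ ·) ⁻¹' transp i j X = transp i j ((f ∘ ·) ⁻¹' X) := by
  ext t
  simp only [transp, Set.mem_preimage, Set.mem_ofPred_eq, Function.comp_update, Function.comp_apply]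

end PreimageComp

theorem Fmap_eq_preimage {n : ℕ} {U W : Type} (X : Set (Fin n → U)) :
    (Fmap X : Set (Fin n → U × W)) = (Prod.fst ∘ ·) ⁻¹' X := by
  ext t
  constructor
  · rintro ⟨s, hs, w, rfl⟩
    exact hs
  · intro ht
    exact ⟨Prod.fst ∘ t, ht, Prod.snd ∘ t, rfl⟩

theorem stmt19_general (n : ℕ) {U V : Type} {f : V → U} (hf : Function.Surjective f) :
    Function.Injective (fun X : Set (Fin n → U) ↦ (f ∘ ·) ⁻¹' X) ∧
    (∀ X Y : Set (Fin n → U), (f ∘ ·) ⁻¹' (X ∪ Y) = (f ∘ ·) ⁻¹' X ∪ (f ∘ ·) ⁻¹' Y) ∧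
    (∀ X : Set (Fin n → U), (f ∘ ·) ⁻¹' Xᶜ = ((f ∘ ·) ⁻¹' X)ᶜ) ∧
    (∀ (ι : Sort*) (X : ι → Set (Fin n → U)), (f ∘ ·) ⁻¹' (⋃ k, X k) = ⋃ k, (f ∘ ·) ⁻¹' X k) ∧
    (∀ (i : Fin n) (X : Set (Fin n → U)), (f ∘ ·) ⁻¹' cyl i X = cyl i ((f ∘ ·) ⁻¹' X)) ∧
    (∀ (i j : Fin n) (X : Set (Fin n → U)),
      (f ∘ ·) ⁻¹' subst i j X = subst i j ((f ∘ ·) ⁻¹' X)) ∧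
    (∀ (i j : Fin n) (X : Set (Fin n → U)),
      (f ∘ ·) ⁻¹' transp i j X = transp i j ((f ∘ ·) ⁻¹' X)) :=
  ⟨hf.comp_left.preimage_injective, fun _ _ ↦ Set.preimage_union, fun _ ↦ Set.preimage_compl,
    fun _ _ ↦ Set.preimage_iUnion, preimage_comp_cyl hf, preimage_comp_subst f,
    preimage_comp_transp f⟩

/-- Lemma: the blow-up map `F : 𝒫(ⁿU) → 𝒫(ⁿ(U×W))` (`W` nonempty) is injective and
preserves union, complement, arbitrary unions, cylindrifications, substitutions and
transpositions. -/
theorem stmt19 (n : ℕ) (U W : Type) [Nonempty W] :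
    Function.Injective (Fmap : Set (Fin n → U) → Set (Fin n → U × W)) ∧
    (∀ X Y : Set (Fin n → U),
      (Fmap (X ∪ Y) : Set (Fin n → U × W)) = Fmap X ∪ Fmap Y) ∧
    (∀ X : Set (Fin n → U), (Fmap Xᶜ : Set (Fin n → U × W)) = (Fmap X)ᶜ) ∧
    (∀ (ι : Type) (X : ι → Set (Fin n → U)),
      (Fmap (⋃ k, X k) : Set (Fin n → U × W)) = ⋃ k, Fmap (X k)) ∧
    (∀ (i : Fin n) (X : Set (Fin n → U)),
      (Fmap (cyl i X) : Set (Fin n → U × W)) = cyl i (Fmap X)) ∧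
    (∀ (i j : Fin n) (X : Set (Fin n → U)),
      (Fmap (subst i j X) : Set (Fin n → U × W)) = subst i j (Fmap X)) ∧
    (∀ (i j : Fin n) (X : Set (Fin n → U)),
      (Fmap (transp i j X) : Set (Fin n → U × W)) = transp i j (Fmap X)) := by
  simpa only [Function.Injective, Fmap_eq_preimage] using
    stmt19_general n (Prod.fst_surjective (α := U) (β := W))
end
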